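/- (Iwasawa decomposition of the twisted loop group of SL(2,ℂ), for smooth loops.) Let σ₃ = diag(1,-1). Let g : S¹ → SL(2,ℂ) be a smooth map satisfying the twisting condition g(-λ) = σ₃ g(λ) σ₃ for all λ ∈ S¹. Then there exist a smooth map F : S¹ → SU(2) with F(-λ) = σ₃ F(λ) σ₃, and a continuous map B from the closed unit disc to SL(2,ℂ) that is holomorphic on the open unit disc, smooth on S¹, satisfies B(-λ) = σ₃ B(λ) σ₃ on the closed disc, and B(0) = diag(ρ, ρ⁻¹) for some real ρ > 0, such that g(λ) = F(λ) B(λ) for all λ ∈ S¹. Moreover the pair (F, B) is unique. -/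

import Mathlib

open Matrix Complex

noncomputable section

attribute [local instance] Matrix.linftyOpNormedAddCommGroup Matrix.linftyOpNormedSpace
  Matrix.linftyOpNormedRing Matrix.linftyOpNormedAlgebra

/-- The space of 2×2 complex matrices. -/
abbrev M2 : Type := Matrix (Fin 2) (Fin 2) ℂ

/-- Basis vector `e₁` of su(2). -/
def e1 : M2 := !![0, -Complex.I; -Complex.I, 0]

/-- Basis vector `e₂` of su(2). -/
def e2 : M2 := !![0, 1; -1, 0]

/-- Basis vector `e₃` of su(2). -/
def e3 : M2 := !![Complex.I, 0; 0, -Complex.I]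

/-- The inner product `⟨X,Y⟩ = -(1/2) tr (XY)` identifying su(2) with E³. -/
def ip (X Y : M2) : ℂ := -(1/2 : ℂ) * (X * Y).trace

/-- Partial derivative in the `x`-direction. -/
def px (f : ℂ → M2) (z : ℂ) : M2 := fderiv ℝ f z 1

/-- Partial derivative in the `y`-direction. -/
def py (f : ℂ → M2) (z : ℂ) : M2 := fderiv ℝ f z Complex.I

/-- Wirtinger derivative `∂_z = (1/2)(∂_x - i ∂_y)`. -/
def dz (f : ℂ → M2) (z : ℂ) : M2 := (2:ℂ)⁻¹ • (px f z - Complex.I • py f z)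

/-- Wirtinger derivative `∂_z̄ = (1/2)(∂_x + i ∂_y)`. -/
def dzb (f : ℂ → M2) (z : ℂ) : M2 := (2:ℂ)⁻¹ • (px f z + Complex.I • py f z)

/-- `x`-derivative of a real-valued function on ℂ. -/
def pxR (u : ℂ → ℝ) (z : ℂ) : ℝ := fderiv ℝ u z 1

/-- `y`-derivative of a real-valued function on ℂ. -/
def pyR (u : ℂ → ℝ) (z : ℂ) : ℝ := fderiv ℝ u z Complex.I

/-- Wirtinger derivative `u_z` of a real-valued function. -/
def dzR (u : ℂ → ℝ) (z : ℂ) : ℂ := (2:ℂ)⁻¹ * ((pxR u z : ℂ) - Complex.I * (pyR u z : ℂ))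

/-- Wirtinger derivative `u_z̄` of a real-valued function. -/
def dzbR (u : ℂ → ℝ) (z : ℂ) : ℂ := (2:ℂ)⁻¹ * ((pxR u z : ℂ) + Complex.I * (pyR u z : ℂ))

/-- `x`-derivative of a complex-valued function on ℂ. -/
def pxC (q : ℂ → ℂ) (z : ℂ) : ℂ := fderiv ℝ q z 1

/-- `y`-derivative of a complex-valued function on ℂ. -/
def pyC (q : ℂ → ℂ) (z : ℂ) : ℂ := fderiv ℝ q z Complex.I

/-- Wirtinger derivative `∂_z` of a complex-valued function. -/
def dzC (q : ℂ → ℂ) (z : ℂ) : ℂ := (2:ℂ)⁻¹ * (pxC q z - Complex.I * pyC q z)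

/-- Wirtinger derivative `∂_z̄` of a complex-valued function. -/
def dzbC (q : ℂ → ℂ) (z : ℂ) : ℂ := (2:ℂ)⁻¹ * (pxC q z + Complex.I * pyC q z)

/-- The matrix σ₃ = diag(1,-1) defining the twisting involution. -/
def sigma3 : M2 := !![1, 0; 0, -1]

/-- `IwasawaPair g F B ρ` records the conditions on the factors of an Iwasawa
decomposition `g = F B` of a smooth twisted loop `g : S¹ → SL(2,ℂ)`:
`F` is a smooth twisted loop in `SU(2)` and `B` extends holomorphically to the unit
disc, is twisted, and satisfies `B(0) = diag(ρ, ρ⁻¹)` with `ρ > 0`. -/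
def IwasawaPair (g F B : ℂ → M2) (ρ : ℝ) : Prop :=
  ContDiff ℝ (⊤ : ℕ∞) (fun t : ℝ => F (Complex.exp (Complex.I * t))) ∧
  (∀ l : ℂ, ‖l‖ = 1 →
    (F l)ᴴ * F l = 1 ∧ (F l).det = 1 ∧ F (-l) = sigma3 * F l * sigma3) ∧
  ContinuousOn B (Metric.closedBall (0:ℂ) 1) ∧
  DifferentiableOn ℂ B (Metric.ball (0:ℂ) 1) ∧
  ContDiff ℝ (⊤ : ℕ∞) (fun t : ℝ => B (Complex.exp (Complex.I * t))) ∧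
  (∀ l ∈ Metric.closedBall (0:ℂ) 1, (B l).det = 1 ∧ B (-l) = sigma3 * B l * sigma3) ∧
  0 < ρ ∧ B 0 = !![(ρ : ℂ), 0; 0, ((ρ⁻¹ : ℝ) : ℂ)] ∧
  (∀ l : ℂ, ‖l‖ = 1 → g l = F l * B l)

/-!
For `h = gᴴ g`, which is positive definite on the circle, the Toeplitz operator with symbol `h` on
`ℓ²(ℕ, ℂⁿ)` is coercive, hence invertible. The zeroth column of its inverse consists of the Taylor
coefficients of a holomorphic `X` with `h X = Yᴴ` on the circle, where `Y` is holomorphic on the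
disc and `Y 0 = 1`. Smoothness of `X` needs no estimate on the inverse: conjugating the operator by
the rotations of the disc gives a smooth curve of operators because `h` is smooth, and inversion of
bounded operators preserves this.

On the circle `Y X = (g X)ᴴ (g X)` is self-adjoint, so by reflection it is a constant `P ^ 2` with
`P` positive definite, and `g = F B` with `F = g X P⁻¹` unitary and `B = P⁻¹ Y`. The quotient of two
such `B` is unitary on the circle and hence constant, again by reflection, which gives uniqueness;
the twisting condition follows since `σ₃ g(-λ) σ₃` has the factors `σ₃ F(-λ) σ₃` and
`σ₃ B(-λ) σ₃`.
-/

/-! ### Fourier series with values in a Banach space -/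

/-- The Fourier mode `t ↦ e^{ikt}`. -/
def expMode (k : ℤ) (t : ℝ) : ℂ := Complex.exp (k * (Complex.I * t))

lemma expMode_eq_zpow (k : ℤ) (t : ℝ) : expMode k t = Complex.exp (Complex.I * t) ^ k := by
  rw [expMode, Complex.exp_int_mul]

lemma expMode_natCast (n : ℕ) (t : ℝ) : expMode n t = Complex.exp (Complex.I * t) ^ n := by
  rw [expMode_eq_zpow, zpow_natCast]

lemma norm_exp_I_mul (t : ℝ) : ‖Complex.exp (Complex.I * t)‖ = 1 := by
  rw [mul_comm, Complex.norm_exp_ofReal_mul_I]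

lemma norm_expMode (k : ℤ) (t : ℝ) : ‖expMode k t‖ = 1 := by
  rw [expMode_eq_zpow, norm_zpow, norm_exp_I_mul, _root_.one_zpow]

lemma expMode_add (k l : ℤ) (t : ℝ) : expMode (k + l) t = expMode k t * expMode l t := by
  simp only [expMode_eq_zpow, zpow_add₀ (Complex.exp_ne_zero _)]

lemma expMode_zero_left (t : ℝ) : expMode 0 t = 1 := by simp [expMode]

lemma expMode_mul_expMode_neg (k : ℤ) (t : ℝ) : expMode k t * expMode (-k) t = 1 := by
  rw [← expMode_add, add_neg_cancel, expMode_zero_left]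

lemma star_expMode (k : ℤ) (t : ℝ) : star (expMode k t) = expMode (-k) t := by
  rw [expMode, expMode, ← starRingEnd_apply, ← Complex.exp_conj]
  simp

lemma contDiff_expMode (k : ℤ) {n : WithTop ℕ∞} : ContDiff ℝ n (expMode k) :=
  (contDiff_const.mul (contDiff_const.mul Complex.ofRealCLM.contDiff)).cexp

lemma continuous_expMode (k : ℤ) : Continuous (expMode k) :=
  (contDiff_expMode k (n := 0)).continuous

lemma hasDerivAt_expMode (k : ℤ) (t : ℝ) :
    HasDerivAt (expMode k) ((Complex.I * k) * expMode k t) t := by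
  have h : HasDerivAt (fun t : ℝ => (k : ℂ) * (Complex.I * (t : ℂ))) (k * (Complex.I * 1)) t :=
    ((Complex.ofRealCLM.hasDerivAt (x := t)).const_mul Complex.I).const_mul (k : ℂ)
  convert! h.cexp using 1
  rw [expMode]
  ring

lemma fourier_coe_eq_expMode (k : ℤ) (t : ℝ) :
    fourier k (t : AddCircle (2 * Real.pi)) = expMode k t := by
  have : (Real.pi : ℂ) ≠ 0 := by exact_mod_cast Real.pi_ne_zero
  rw [fourier_coe_apply, expMode]
  congr 1
  push_cast
  field_simp

lemma periodic_expMode (k : ℤ) : Function.Periodic (expMode k) (2 * Real.pi) := by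
  intro t
  rw [← fourier_coe_eq_expMode, ← fourier_coe_eq_expMode]
  simp

lemma periodic_comp_exp_I_mul {α : Type*} (f : ℂ → α) :
    Function.Periodic (fun t : ℝ => f (Complex.exp (Complex.I * t))) (2 * Real.pi) := by
  intro t
  have h := periodic_expMode 1 t
  simp only [expMode_eq_zpow, zpow_one] at h
  exact congrArg f h

lemma exists_exp_I_mul_eq {z : ℂ} (hz : ‖z‖ = 1) : ∃ t : ℝ, Complex.exp (Complex.I * t) = z := by
  obtain ⟨t, ht⟩ := Complex.norm_eq_one_iff z |>.1 hz
  exact ⟨t, by rw [mul_comm, ht]⟩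

/-- A family `c` indexed by frequencies `ν` is rapidly decreasing if it is absolutely summable
against every power of the frequency; these are the coefficient families of smooth Fourier
series. -/
def RapidlyDecreasing {ι E : Type*} [NormedAddCommGroup E] (ν : ι → ℤ) (c : ι → E) : Prop :=
  ∀ m : ℕ, Summable fun i => |(ν i : ℝ)| ^ m * ‖c i‖

lemma periodic_deriv {E : Type*} [NormedAddCommGroup E] [NormedSpace ℝ E] {f : ℝ → E} {c : ℝ}
    (hp : Function.Periodic f c) : Function.Periodic (deriv f) c := fun t => by
  rw [← deriv_comp_add_const, funext hp]

section FourierSeries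

variable {ι E F : Type*} [NormedAddCommGroup E] [NormedAddCommGroup F] {ν : ι → ℤ} {c : ι → E}

lemma RapidlyDecreasing.summable_norm (hc : RapidlyDecreasing ν c) :
    Summable fun i => ‖c i‖ := by
  simpa using hc 0

lemma rapidlyDecreasing_of_bounded (hν : Function.Injective ν)
    (h : ∀ m : ℕ, ∃ C : ℝ, ∀ i, |(ν i : ℝ)| ^ m * ‖c i‖ ≤ C) : RapidlyDecreasing ν c := by
  intro m
  obtain ⟨C, hC⟩ := h (m + 2)
  have hs : Summable fun i => C * (1 / (ν i : ℝ) ^ 2) :=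
    ((Real.summable_one_div_int_pow.2 one_lt_two).comp_injective hν).mul_left C
  refine hs.of_norm_bounded_eventually ?_
  refine ((Set.finite_singleton (0 : ℤ)).preimage hν.injOn).subset fun i hi => ?_
  by_contra h0
  have hν0 : (ν i : ℝ) ≠ 0 := by exact_mod_cast h0
  refine hi ?_
  change ‖|(ν i : ℝ)| ^ m * ‖c i‖‖ ≤ C * (1 / (ν i : ℝ) ^ 2)
  rw [Real.norm_of_nonneg (by positivity), mul_one_div, le_div_iff₀ (by positivity)]
  calc |(ν i : ℝ)| ^ m * ‖c i‖ * (ν i : ℝ) ^ 2 = |(ν i : ℝ)| ^ (m + 2) * ‖c i‖ := by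
        rw [pow_add, sq_abs]; ring
    _ ≤ C := hC i

variable [NormedSpace ℂ E] [NormedSpace ℂ F]

lemma iteratedDeriv_expMode_smul (k : ℤ) (x : E) (m : ℕ) :
    iteratedDeriv m (fun t => expMode k t • x)
      = fun t => (Complex.I * k) ^ m • expMode k t • x := by
  induction m with
  | zero => simp
  | succ m ih =>
    funext t
    have h := ((hasDerivAt_expMode k t).smul_const x).const_smul ((Complex.I * k) ^ m)
    rw [iteratedDeriv_succ, ih]
    refine h.deriv.trans ?_
    rw [mul_smul, smul_smul, pow_succ]

lemma norm_iteratedFDeriv_expMode_smul (k : ℤ) (x : E) (m : ℕ) (t : ℝ) :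
    ‖iteratedFDeriv ℝ m (fun t => expMode k t • x) t‖ = |(k : ℝ)| ^ m * ‖x‖ := by
  rw [norm_iteratedFDeriv_eq_norm_iteratedDeriv, iteratedDeriv_expMode_smul]
  simp [norm_smul, norm_expMode]

lemma contDiff_tsum_expMode_smul [CompleteSpace E] (hc : RapidlyDecreasing ν c) :
    ContDiff ℝ (⊤ : ℕ∞) (fun t => ∑' i, expMode (ν i) t • c i) :=
  contDiff_tsum (fun i => (contDiff_expMode (ν i)).smul contDiff_const) (fun m _ => hc m)
    fun m i t _ => (norm_iteratedFDeriv_expMode_smul (ν i) (c i) m t).le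

/-- The `k`-th Fourier coefficient `(2π)⁻¹ ∫₀^{2π} e^{-ikt} f(t) dt` of a vector-valued function. -/
def periodicCoeff (f : ℝ → E) (k : ℤ) : E :=
  ((2 * Real.pi : ℝ) : ℂ)⁻¹ • ∫ t in (0 : ℝ)..(2 * Real.pi), expMode (-k) t • f t

lemma norm_periodicCoeff_le {f : ℝ → E} {C : ℝ} (hC : ∀ t, ‖f t‖ ≤ C) (k : ℤ) :
    ‖periodicCoeff f k‖ ≤ C := by
  have h := intervalIntegral.norm_integral_le_of_norm_le_const (a := 0) (b := 2 * Real.pi)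
    (f := fun t => expMode (-k) t • f t) (C := C) fun t _ => by
      rw [norm_smul, norm_expMode, one_mul]; exact hC t
  have hpi := Real.two_pi_pos
  rw [periodicCoeff, norm_smul, norm_inv, Complex.norm_real, Real.norm_of_nonneg hpi.le,
    inv_mul_le_iff₀ hpi]
  rwa [sub_zero, abs_of_pos hpi, mul_comm C] at h

lemma map_periodicCoeff [CompleteSpace E] [CompleteSpace F] (L : E →L[ℂ] F)
    {f : ℝ → E} (hf : Continuous f) (k : ℤ) :
    L (periodicCoeff f k) = periodicCoeff (fun t => L (f t)) k := by
  have hint : IntervalIntegrable (fun t => expMode (-k) t • f t) MeasureTheory.volume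
      0 (2 * Real.pi) := ((continuous_expMode _).smul hf).intervalIntegrable _ _
  rw [periodicCoeff, periodicCoeff, map_smul, ← L.intervalIntegral_comp_comm hint]
  simp only [map_smul]

lemma periodicCoeff_deriv [CompleteSpace E] {f : ℝ → E} (hf : ContDiff ℝ 1 f)
    (hp : Function.Periodic f (2 * Real.pi)) (k : ℤ) :
    periodicCoeff (deriv f) k = (Complex.I * k) • periodicCoeff f k := by
  have hd : Continuous (deriv f) := hf.continuous_deriv le_rfl
  have hint₁ : IntervalIntegrable (fun t => expMode (-k) t • deriv f t) MeasureTheory.volume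
      0 (2 * Real.pi) := ((continuous_expMode _).smul hd).intervalIntegrable _ _
  have hint₂ : IntervalIntegrable (fun t => (Complex.I * k) • expMode (-k) t • f t)
      MeasureTheory.volume 0 (2 * Real.pi) :=
    (((continuous_expMode _).smul hf.continuous).const_smul _).intervalIntegrable _ _
  have hderiv : ∀ t, HasDerivAt (fun t => expMode (-k) t • f t)
      (expMode (-k) t • deriv f t - (Complex.I * k) • expMode (-k) t • f t) t := fun t => by
    convert! (hasDerivAt_expMode (-k) t).smul
      (hf.differentiable one_ne_zero t).hasDerivAt using 1
    rw [sub_eq_add_neg, Int.cast_neg, mul_neg, neg_mul, neg_smul, smul_smul]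
  have hFTC := intervalIntegral.integral_eq_sub_of_hasDerivAt (fun t _ => hderiv t)
    (hint₁.sub hint₂)
  have hends : expMode (-k) (2 * Real.pi) • f (2 * Real.pi) = expMode (-k) 0 • f 0 := by
    simpa using congrArg₂ (· • ·) (periodic_expMode (-k) 0) (hp 0)
  rw [hends, sub_self, intervalIntegral.integral_sub hint₁ hint₂, sub_eq_zero,
    intervalIntegral.integral_smul] at hFTC
  rw [periodicCoeff, periodicCoeff, hFTC, smul_comm]

lemma exists_bound_pow_mul_norm_periodicCoeff [CompleteSpace E] (m : ℕ) :
    ∀ f : ℝ → E, ContDiff ℝ (⊤ : ℕ∞) f → Function.Periodic f (2 * Real.pi) →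
      ∃ C : ℝ, ∀ k : ℤ, |(k : ℝ)| ^ m * ‖periodicCoeff f k‖ ≤ C := by
  induction m with
  | zero =>
    intro f hf hp
    obtain ⟨C, hC⟩ :=
      (hp.isBounded_of_continuous Real.two_pi_pos.ne' hf.continuous).exists_norm_le
    exact ⟨C, fun k => by
      simpa using norm_periodicCoeff_le (fun t => hC _ (Set.mem_range_self t)) k⟩
  | succ m ih =>
    intro f hf hp
    have hderiv : ContDiff ℝ (⊤ : ℕ∞) (deriv f) := ContDiff.deriv' (by simpa using hf)
    obtain ⟨C, hC⟩ := ih (deriv f) hderiv (periodic_deriv hp)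
    refine ⟨C, fun k => le_of_eq_of_le ?_ (hC k)⟩
    rw [periodicCoeff_deriv (hf.of_le (by simp)) hp, norm_smul, norm_mul, Complex.norm_I, one_mul,
      Complex.norm_intCast, pow_succ, mul_assoc]

lemma rapidlyDecreasing_periodicCoeff [CompleteSpace E] {f : ℝ → E} (hf : ContDiff ℝ (⊤ : ℕ∞) f)
    (hp : Function.Periodic f (2 * Real.pi)) : RapidlyDecreasing id (periodicCoeff f) :=
  rapidlyDecreasing_of_bounded Function.injective_id fun m =>
    exists_bound_pow_mul_norm_periodicCoeff m f hf hp

lemma hasSum_periodicCoeff_complex {f : ℝ → ℂ} (hf : Continuous f)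
    (hp : Function.Periodic f (2 * Real.pi)) (hs : Summable (periodicCoeff f)) (t : ℝ) :
    HasSum (fun k => expMode k t • periodicCoeff f k) (f t) := by
  have : Fact (0 < 2 * Real.pi) := ⟨Real.two_pi_pos⟩
  let φ : C(AddCircle (2 * Real.pi), ℂ) := ⟨hp.lift, continuous_quot_lift _ hf⟩
  have hφ : ∀ s : ℝ, φ (s : AddCircle (2 * Real.pi)) = f s := hp.lift_coe
  have hcoeff : fourierCoeff φ = periodicCoeff f := by
    funext k
    rw [fourierCoeff_eq_intervalIntegral _ _ 0, periodicCoeff, zero_add, one_div,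
      ← Complex.ofReal_inv, Complex.coe_smul]
    simp only [hφ, fourier_coe_eq_expMode]
  have h := has_pointwise_sum_fourier_series_of_summable (hcoeff ▸ hs)
    (t : AddCircle (2 * Real.pi))
  simpa only [hcoeff, hφ, fourier_coe_eq_expMode, smul_eq_mul, mul_comm] using h

lemma hasSum_periodicCoeff [CompleteSpace E] {f : ℝ → E} (hf : Continuous f)
    (hp : Function.Periodic f (2 * Real.pi)) (hs : Summable fun k => ‖periodicCoeff f k‖) (t : ℝ) :
    HasSum (fun k => expMode k t • periodicCoeff f k) (f t) := by
  have hsum : Summable fun k => expMode k t • periodicCoeff f k :=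
    .of_norm (by simpa only [norm_smul, norm_expMode, one_mul] using hs)
  suffices ∑' k, expMode k t • periodicCoeff f k = f t from this ▸ hsum.hasSum
  refine (SeparatingDual.eq_iff_forall_dual_eq (R := ℂ)).2 fun L => ?_
  have hL : periodicCoeff (fun t => L (f t)) = fun k => L (periodicCoeff f k) :=
    funext fun k => (map_periodicCoeff L hf k).symm
  have hscalar := hasSum_periodicCoeff_complex (L.continuous.comp hf) (fun t => by simp [hp t])
    (by rw [show L ∘ f = fun t => L (f t) from rfl, hL]; exact hs.of_norm.mapL L) t
  rw [L.map_tsum hsum]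
  simpa only [map_smul, hL, Function.comp_def] using hscalar.tsum_eq

lemma periodicCoeff_const [CompleteSpace E] (x : E) (k : ℤ) :
    periodicCoeff (fun _ => x) k = if k = 0 then x else 0 := by
  split_ifs with hk
  · have hpi : ((2 * Real.pi : ℝ) : ℂ) ≠ 0 := by exact_mod_cast Real.two_pi_pos.ne'
    simp only [periodicCoeff, hk, neg_zero, expMode_zero_left, one_smul,
      intervalIntegral.integral_const, sub_zero]
    rw [← Complex.coe_smul, inv_smul_smul₀ hpi]
  · have h := periodicCoeff_deriv (f := fun _ => x) contDiff_const (fun _ => rfl) k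
    have hz : periodicCoeff (deriv fun _ : ℝ => x) k = 0 := by simp [periodicCoeff]
    have hI : Complex.I * (k : ℂ) ≠ 0 :=
      mul_ne_zero Complex.I_ne_zero (by exact_mod_cast hk)
    exact (smul_eq_zero.1 (h.symm.trans hz)).resolve_left hI

end FourierSeries

/-! ### Toeplitz operators on `ℓ²(ℕ, E)` -/

/-- The space `ℓ²(ℕ, E)` of square-summable sequences, that is, the Hardy space of `E`-valued
functions on the unit disc in terms of power series coefficients. -/
abbrev HardySpace (E : Type*) [NormedAddCommGroup E] : Type _ := lp (fun _ : ℕ => E) 2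

section Toeplitz

variable {E : Type*} [NormedAddCommGroup E] [InnerProductSpace ℂ E]

lemma sum_norm_rpow_weightedComp_le (w : ℕ → E →L[ℂ] E) (φ : ℕ → ℕ) {C : ℝ} (hC : 0 ≤ C)
    (hw : ∀ i, ‖w i‖ ≤ C) (hφ : Set.InjOn φ {i | w i ≠ 0}) (x : HardySpace E) (s : Finset ℕ) :
    ∑ i ∈ s, ‖w i (x (φ i))‖ ^ (2 : ENNReal).toReal ≤ (C * ‖x‖) ^ (2 : ENNReal).toReal := by
  classical
  have hpos : 0 < (2 : ENNReal).toReal := by simp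
  calc ∑ i ∈ s, ‖w i (x (φ i))‖ ^ (2 : ENNReal).toReal
      = ∑ i ∈ s with w i ≠ 0, ‖w i (x (φ i))‖ ^ (2 : ENNReal).toReal :=
        (Finset.sum_filter_of_ne fun i _ hi => by contrapose! hi; simp [hi]).symm
    _ ≤ ∑ i ∈ s with w i ≠ 0, C ^ (2 : ENNReal).toReal * ‖x (φ i)‖ ^ (2 : ENNReal).toReal := by
        refine Finset.sum_le_sum fun i _ => ?_
        rw [← Real.mul_rpow hC (norm_nonneg _)]
        exact Real.rpow_le_rpow (norm_nonneg _) ((w i).le_of_opNorm_le (hw i) _) hpos.le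
    _ = C ^ (2 : ENNReal).toReal *
          ∑ j ∈ (s.filter fun i => w i ≠ 0).image φ, ‖x j‖ ^ (2 : ENNReal).toReal := by
        have hinj : Set.InjOn φ ((s.filter fun i => w i ≠ 0 : Finset ℕ) : Set ℕ) :=
          hφ.mono fun i hi => (Finset.mem_filter.1 hi).2
        rw [Finset.sum_image hinj, Finset.mul_sum]
    _ ≤ C ^ (2 : ENNReal).toReal * ‖x‖ ^ (2 : ENNReal).toReal := by
        gcongr
        exact lp.sum_rpow_le_norm_rpow hpos x _
    _ = (C * ‖x‖) ^ (2 : ENNReal).toReal := (Real.mul_rpow hC (norm_nonneg _)).symm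

/-- The weighted composition operator `(x i) ↦ (w i (x (φ i)))`, with operator weights `w` bounded
by `C`; it is bounded on `ℓ²` because `φ` is injective where the weight does not vanish. -/
def weightedComp (w : ℕ → E →L[ℂ] E) (φ : ℕ → ℕ) {C : ℝ} (hC : 0 ≤ C) (hw : ∀ i, ‖w i‖ ≤ C)
    (hφ : Set.InjOn φ {i | w i ≠ 0}) : HardySpace E →L[ℂ] HardySpace E :=
  LinearMap.mkContinuous
    { toFun := fun x =>
        ⟨fun i => w i (x (φ i)), memℓp_gen' (sum_norm_rpow_weightedComp_le w φ hC hw hφ x)⟩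
      map_add' := fun x y => lp.ext (funext fun i => map_add (w i) _ _)
      map_smul' := fun a x => lp.ext (funext fun i => map_smul (w i) _ _) }
    C fun x => lp.norm_le_of_forall_sum_le (by simp) (by positivity)
      (sum_norm_rpow_weightedComp_le w φ hC hw hφ x)

lemma norm_weightedComp_le (w : ℕ → E →L[ℂ] E) (φ : ℕ → ℕ) {C : ℝ} (hC : 0 ≤ C)
    (hw : ∀ i, ‖w i‖ ≤ C) (hφ : Set.InjOn φ {i | w i ≠ 0}) :
    ‖weightedComp w φ hC hw hφ‖ ≤ C :=
  ContinuousLinearMap.opNorm_le_bound _ hC fun x =>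
    lp.norm_le_of_forall_sum_le (by simp) (by positivity)
      (sum_norm_rpow_weightedComp_le w φ hC hw hφ x)

/-- The Toeplitz operator with symbol `e^{ikt} A`: the shift by `k` composed with `A`. -/
def modeOperator (k : ℤ) (A : E →L[ℂ] E) : HardySpace E →L[ℂ] HardySpace E :=
  weightedComp (fun m => if k ≤ m then A else 0) (fun m => (m - k).toNat) (norm_nonneg A)
    (fun m => by split_ifs <;> simp) fun m hm n hn h => by
      simp only [ne_eq, ite_eq_right_iff, Classical.not_imp, Set.mem_ofPred_eq] at hm hn
      simp only at h
      omega

lemma modeOperator_apply (k : ℤ) (A : E →L[ℂ] E) (x : HardySpace E) (m : ℕ) :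
    modeOperator k A x m = (if k ≤ m then A else 0) (x (m - k).toNat) := rfl

lemma norm_modeOperator_le (k : ℤ) (A : E →L[ℂ] E) : ‖modeOperator k A‖ ≤ ‖A‖ :=
  norm_weightedComp_le _ _ (norm_nonneg A) _ _

/-- The operator on power series coefficients given by the rotation `z ↦ e^{iθ} z`. -/
def hardyRotation (E : Type*) [NormedAddCommGroup E] [InnerProductSpace ℂ E] (θ : ℝ) :
    HardySpace E →L[ℂ] HardySpace E :=
  weightedComp (fun m => expMode m θ • ContinuousLinearMap.id ℂ E) id zero_le_one
    (fun m => by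
      rw [norm_smul, norm_expMode, one_mul]; exact ContinuousLinearMap.norm_id_le)
    Function.injective_id.injOn

lemma hardyRotation_apply (θ : ℝ) (x : HardySpace E) (m : ℕ) :
    hardyRotation E θ x m = expMode m θ • x m := rfl

lemma hardyRotation_mul_hardyRotation_neg (θ : ℝ) :
    hardyRotation E θ * hardyRotation E (-θ) = 1 := by
  ext x m
  have h : expMode m (-θ) = expMode (-m) θ := by simp [expMode]
  change expMode m θ • expMode m (-θ) • x m = x m
  rw [h, smul_smul, expMode_mul_expMode_neg, one_smul]

/-- The rotation as a unit of the algebra of bounded operators. -/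
def hardyRotationUnit (E : Type*) [NormedAddCommGroup E] [InnerProductSpace ℂ E] (θ : ℝ) :
    (HardySpace E →L[ℂ] HardySpace E)ˣ where
  val := hardyRotation E θ
  inv := hardyRotation E (-θ)
  val_inv := hardyRotation_mul_hardyRotation_neg θ
  inv_val := by simpa using hardyRotation_mul_hardyRotation_neg (E := E) (-θ)

lemma hardyRotation_conj_modeOperator (θ : ℝ) (k : ℤ) (A : E →L[ℂ] E) :
    hardyRotation E θ * modeOperator k A * hardyRotation E (-θ)
      = expMode k θ • modeOperator k A := by
  have hcomm : hardyRotation E θ * modeOperator k A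
      = (expMode k θ • modeOperator k A) * hardyRotation E θ := by
    ext x m
    change expMode m θ • modeOperator k A x m
      = expMode k θ • modeOperator k A (hardyRotation E θ x) m
    rw [modeOperator_apply, modeOperator_apply, hardyRotation_apply]
    split_ifs with hkm
    · have hm : (m : ℤ) = k + ((m - k).toNat : ℤ) := by omega
      rw [map_smul, smul_smul, ← expMode_add, ← hm]
    · simp
  rw [hcomm, mul_assoc, hardyRotation_mul_hardyRotation_neg, mul_one]

/-- A bounded operator on the Hardy space is smooth if its orbit under conjugation by rotations
is. Toeplitz operators with smooth symbol have this property, and unlike them smooth operators are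
closed under inversion. -/
def IsSmoothOperator (T : HardySpace E →L[ℂ] HardySpace E) : Prop :=
  ContDiff ℝ (⊤ : ℕ∞) fun θ => hardyRotation E θ * T * hardyRotation E (-θ)

lemma IsSmoothOperator.inv [CompleteSpace E] {T : (HardySpace E →L[ℂ] HardySpace E)ˣ}
    (hT : IsSmoothOperator (T : HardySpace E →L[ℂ] HardySpace E)) :
    IsSmoothOperator (↑T⁻¹ : HardySpace E →L[ℂ] HardySpace E) := by
  have hinv : (fun θ =>
        hardyRotation E θ * (↑T⁻¹ : HardySpace E →L[ℂ] HardySpace E) * hardyRotation E (-θ))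
      = fun θ => Ring.inverse (hardyRotation E θ * T * hardyRotation E (-θ)) := funext fun θ => by
    have hconj : hardyRotation E θ * T * hardyRotation E (-θ)
        = ↑(hardyRotationUnit E θ * T * (hardyRotationUnit E θ)⁻¹) := rfl
    rw [hconj, Ring.inverse_unit, _root_.mul_inv_rev, _root_.mul_inv_rev, inv_inv, ← mul_assoc]
    rfl
  rw [IsSmoothOperator, hinv, contDiff_iff_contDiffAt]
  intro θ
  exact ContDiffAt.comp θ
    (contDiffAt_ringInverse ℝ (hardyRotationUnit E θ * T * (hardyRotationUnit E θ)⁻¹))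
    hT.contDiffAt

/-- The `(p, q)` block of an operator on `ℓ²(ℕ, E)`, depending continuously on the operator. -/
def matrixCoeff (p q : ℕ) : (HardySpace E →L[ℂ] HardySpace E) →L[ℂ] E →L[ℂ] E :=
  LinearMap.mkContinuous
    { toFun := fun T => lp.evalCLM ℂ (fun _ : ℕ => E) 2 p ∘L T ∘L
        lp.singleContinuousLinearMap ℂ (fun _ : ℕ => E) 2 q
      map_add' := fun S T => rfl
      map_smul' := fun a T => rfl } 1 fun T => by
    rw [one_mul]
    refine ContinuousLinearMap.opNorm_le_bound _ (norm_nonneg T) fun v => ?_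
    calc ‖T (lp.single 2 q v) p‖ ≤ ‖T (lp.single 2 q v)‖ := lp.norm_apply_le_norm two_ne_zero _ _
      _ ≤ ‖T‖ * ‖v‖ := by
          simpa only [lp.norm_single two_pos] using T.le_opNorm (lp.single 2 q v)

lemma matrixCoeff_apply (p q : ℕ) (T : HardySpace E →L[ℂ] HardySpace E) (v : E) :
    matrixCoeff p q T v = T (lp.single 2 q v) p := rfl

set_option maxSynthPendingDepth 2 in
lemma norm_matrixCoeff_le (p q : ℕ) : ‖matrixCoeff (E := E) p q‖ ≤ 1 :=
  LinearMap.mkContinuous_norm_le _ zero_le_one _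

lemma hasSum_matrixCoeff_apply (T : HardySpace E →L[ℂ] HardySpace E) (x : HardySpace E) (p : ℕ) :
    HasSum (fun q => matrixCoeff p q T (x q)) (T x p) :=
  (lp.hasSum_single ENNReal.ofNat_ne_top x).mapL
    (lp.evalCLM ℂ (fun _ : ℕ => E) 2 p ∘L T)

lemma matrixCoeff_one (p q : ℕ) :
    matrixCoeff (E := E) p q 1 = if p = q then 1 else 0 := by
  ext v
  rw [matrixCoeff_apply]
  change lp.single (E := fun _ : ℕ => E) 2 q v p = _
  rw [lp.single_apply, Pi.single_apply]
  split_ifs <;> simp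

lemma matrixCoeff_modeOperator (p q : ℕ) (k : ℤ) (A : E →L[ℂ] E) :
    matrixCoeff p q (modeOperator k A) = if k = p - q then A else 0 := by
  ext v
  rw [matrixCoeff_apply, modeOperator_apply, lp.single_apply, Pi.single_apply]
  split_ifs <;> first | omega | simp

lemma matrixCoeff_hardyRotation_conj (θ : ℝ) (T : HardySpace E →L[ℂ] HardySpace E) (p : ℕ) :
    matrixCoeff p 0 (hardyRotation E θ * T * hardyRotation E (-θ))
      = expMode p θ • matrixCoeff p 0 T := by
  ext v
  have hsingle : hardyRotation E (-θ) (lp.single 2 0 v) = lp.single 2 0 v := by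
    ext m
    rw [hardyRotation_apply, lp.single_apply, Pi.single_apply]
    split_ifs with hm
    · simp [hm, expMode_zero_left]
    · rw [smul_zero]
  change hardyRotation E θ (T (hardyRotation E (-θ) (lp.single 2 0 v))) p
    = expMode p θ • T (lp.single 2 0 v) p
  rw [hsingle, hardyRotation_apply]

set_option maxSynthPendingDepth 2 in
/-- Rotating by `θ` multiplies the `p`-th coefficient by `e^{ipθ}`, so every `θ`-derivative of the
rotated operator costs a factor `p`. -/
lemma IsSmoothOperator.rapidlyDecreasing_matrixCoeff {T : HardySpace E →L[ℂ] HardySpace E}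
    (hT : IsSmoothOperator T) :
    RapidlyDecreasing (fun p : ℕ => (p : ℤ)) fun p => matrixCoeff p 0 T := by
  refine rapidlyDecreasing_of_bounded Nat.cast_injective fun m =>
    ⟨‖iteratedFDeriv ℝ m (fun θ => hardyRotation E θ * T * hardyRotation E (-θ)) 0‖, fun p => ?_⟩
  let L := (matrixCoeff (E := E) p 0).restrictScalars ℝ
  have hL : L ∘ (fun θ => hardyRotation E θ * T * hardyRotation E (-θ))
      = fun θ => expMode p θ • matrixCoeff p 0 T :=
    funext fun θ => matrixCoeff_hardyRotation_conj θ T p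
  have hbound := L.norm_iteratedFDeriv_comp_left (x := 0) hT.contDiffAt
    (show (m : WithTop ℕ∞) ≤ ((⊤ : ℕ∞) : WithTop ℕ∞) by exact_mod_cast le_top)
  rw [hL, norm_iteratedFDeriv_expMode_smul] at hbound
  refine hbound.trans (mul_le_of_le_one_left (norm_nonneg _) ?_)
  rw [ContinuousLinearMap.norm_restrictScalars]
  exact norm_matrixCoeff_le p 0

variable [CompleteSpace E]

/-- A bounded operator on the Hardy space is the Toeplitz operator with symbol `a` if its `(p, q)`
block is the Fourier coefficient of `a` at `p - q`. -/
def IsToeplitz (T : HardySpace E →L[ℂ] HardySpace E) (a : ℝ → E →L[ℂ] E) : Prop :=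
  ∀ p q : ℕ, matrixCoeff p q T = periodicCoeff a (p - q)

lemma exists_isToeplitz_isSmoothOperator {a : ℝ → E →L[ℂ] E} (ha : ContDiff ℝ (⊤ : ℕ∞) a)
    (hper : Function.Periodic a (2 * Real.pi)) :
    ∃ T : HardySpace E →L[ℂ] HardySpace E, IsToeplitz T a ∧ IsSmoothOperator T := by
  have hdecay : RapidlyDecreasing id fun k => modeOperator k (periodicCoeff a k) := fun m =>
    (rapidlyDecreasing_periodicCoeff ha hper m).of_nonneg_of_le (fun k => by positivity)
      fun k => by gcongr; exact norm_modeOperator_le _ _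
  have hsum : Summable fun k => modeOperator k (periodicCoeff a k) := hdecay.summable_norm.of_norm
  refine ⟨∑' k, modeOperator k (periodicCoeff a k), fun p q => ?_, ?_⟩
  · rw [ContinuousLinearMap.map_tsum _ hsum]
    simp only [matrixCoeff_modeOperator]
    exact tsum_ite_eq _ _
  · have hconj : (fun θ => hardyRotation E θ * (∑' k, modeOperator k (periodicCoeff a k)) *
          hardyRotation E (-θ))
        = fun θ => ∑' k, expMode (id k) θ • modeOperator k (periodicCoeff a k) :=
      funext fun θ => by
        rw [← hsum.tsum_mul_left, ← (hsum.mul_left _).tsum_mul_right]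
        exact tsum_congr fun k => hardyRotation_conj_modeOperator θ k _
    rw [IsSmoothOperator, hconj]
    exact contDiff_tsum_expMode_smul hdecay

end Toeplitz

section Positivity

variable {E : Type*} [NormedAddCommGroup E] [InnerProductSpace ℂ E] [CompleteSpace E]

lemma sum_inner_periodicCoeff {a : ℝ → E →L[ℂ] E} (ha : Continuous a) (s : Finset ℕ) (v : ℕ → E) :
    ∑ p ∈ s, ∑ q ∈ s, inner ℂ (v p) (periodicCoeff a (p - q) (v q))
      = ((2 * Real.pi : ℝ) : ℂ)⁻¹ * ∫ t in (0 : ℝ)..(2 * Real.pi),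
          inner ℂ (∑ p ∈ s, expMode p t • v p) (a t (∑ q ∈ s, expMode q t • v q)) := by
  have hterm : ∀ p q : ℕ, inner ℂ (v p) (periodicCoeff a (p - q) (v q))
      = ((2 * Real.pi : ℝ) : ℂ)⁻¹ * ∫ t in (0 : ℝ)..(2 * Real.pi),
          inner ℂ (expMode p t • v p) (a t (expMode q t • v q)) := fun p q => by
    have h := map_periodicCoeff (innerSL ℂ (v p) ∘L ContinuousLinearMap.apply ℂ E (v q)) ha (p - q)
    refine h.trans ?_
    rw [periodicCoeff, smul_eq_mul]
    congr 2
    funext t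
    have hmode : expMode (-(p - q)) t = star (expMode p t) * expMode q t := by
      rw [star_expMode, ← expMode_add]; congr 1; ring
    simp only [map_smul, inner_smul_left, inner_smul_right, hmode, smul_eq_mul,
      ContinuousLinearMap.comp_apply, ContinuousLinearMap.apply_apply, coe_innerSL_apply,
      starRingEnd_apply]
    ring
  have hcont : ∀ p q : ℕ, Continuous fun t =>
      inner ℂ (expMode p t • v p) (a t (expMode q t • v q)) := fun p q =>
    ((continuous_expMode p).smul continuous_const).inner
      (ha.clm_apply ((continuous_expMode q).smul continuous_const))
  simp only [hterm, ← Finset.mul_sum, sum_inner]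
  simp only [map_sum, inner_sum]
  rw [intervalIntegral.integral_finsetSum fun p _ =>
    (continuous_finsetSum s fun q _ => hcont p q).intervalIntegrable _ _]
  simp only [intervalIntegral.integral_finsetSum fun q _ => (hcont _ q).intervalIntegrable _ _]

lemma re_sum_inner_periodicCoeff_nonneg {a : ℝ → E →L[ℂ] E} (ha : Continuous a)
    (hpos : ∀ t x, 0 ≤ (inner ℂ x (a t x)).re) (s : Finset ℕ) (v : ℕ → E) :
    0 ≤ (∑ p ∈ s, ∑ q ∈ s, inner ℂ (v p) (periodicCoeff a (p - q) (v q))).re := by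
  have hcont : Continuous fun t : ℝ =>
      inner ℂ (∑ p ∈ s, expMode p t • v p) (a t (∑ q ∈ s, expMode q t • v q)) := by
    have hu : Continuous fun t => ∑ p ∈ s, expMode p t • v p :=
      continuous_finsetSum s fun p _ => (continuous_expMode p).smul continuous_const
    exact hu.inner (ha.clm_apply hu)
  have hre := Complex.reCLM.intervalIntegral_comp_comm
    (hcont.intervalIntegrable (μ := MeasureTheory.volume) 0 (2 * Real.pi))
  rw [sum_inner_periodicCoeff ha, ← Complex.ofReal_inv, Complex.re_ofReal_mul]
  refine mul_nonneg (inv_nonneg.2 Real.two_pi_pos.le) ?_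
  exact (intervalIntegral.integral_nonneg Real.two_pi_pos.le fun t _ => hpos t _).trans_eq hre

lemma IsToeplitz.re_inner_nonneg {T : HardySpace E →L[ℂ] HardySpace E} {a : ℝ → E →L[ℂ] E}
    (hT : IsToeplitz T a) (ha : Continuous a) (hpos : ∀ t x, 0 ≤ (inner ℂ x (a t x)).re)
    (x : HardySpace E) : 0 ≤ (inner ℂ x (T x)).re := by
  let trunc : Finset ℕ → HardySpace E := fun s => ∑ q ∈ s, lp.single 2 q (x q)
  have htrunc : Filter.Tendsto trunc Filter.atTop (nhds x) :=
    lp.hasSum_single ENNReal.ofNat_ne_top x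
  have hlim : Filter.Tendsto (fun s => (inner ℂ (trunc s) (T (trunc s))).re) Filter.atTop
      (nhds (inner ℂ x (T x)).re) :=
    (Complex.continuous_re.tendsto _).comp
      (htrunc.inner ((T.continuous.tendsto x).comp htrunc))
  refine ge_of_tendsto' hlim fun s => ?_
  have hform : inner ℂ (trunc s) (T (trunc s))
      = ∑ p ∈ s, ∑ q ∈ s, inner ℂ (x p) (periodicCoeff a (p - q) (x q)) := by
    simp only [trunc, sum_inner, lp.inner_single_left]
    simp only [map_sum, lp.coeFn_sum, Finset.sum_apply, inner_sum, ← hT _ _, matrixCoeff_apply]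
  rw [hform]
  exact re_sum_inner_periodicCoeff_nonneg ha hpos s x

lemma periodicCoeff_sub_const {F : Type*} [NormedAddCommGroup F] [NormedSpace ℂ F]
    [CompleteSpace F] {f : ℝ → F} (hf : Continuous f) (x : F) (k : ℤ) :
    periodicCoeff (fun t => f t - x) k = periodicCoeff f k - if k = 0 then x else 0 := by
  rw [← periodicCoeff_const, periodicCoeff, periodicCoeff, periodicCoeff, ← smul_sub,
    ← intervalIntegral.integral_sub]
  · simp only [smul_sub]
  · exact ((continuous_expMode _).smul hf).intervalIntegrable _ _
  · exact ((continuous_expMode _).smul continuous_const).intervalIntegrable _ _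

lemma IsToeplitz.sub_smul_one {T : HardySpace E →L[ℂ] HardySpace E} {a : ℝ → E →L[ℂ] E}
    (hT : IsToeplitz T a) (ha : Continuous a) (c : ℂ) :
    IsToeplitz (T - c • 1) fun t => a t - c • 1 := fun p q => by
  rw [map_sub, map_smul, hT, matrixCoeff_one, periodicCoeff_sub_const ha]
  simp only [sub_eq_zero, Nat.cast_inj, smul_ite, smul_zero]

lemma IsToeplitz.isUnit {T : HardySpace E →L[ℂ] HardySpace E} {a : ℝ → E →L[ℂ] E}
    (hT : IsToeplitz T a) (ha : Continuous a) {c : ℝ} (hc : 0 < c)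
    (hcoer : ∀ t x, c * ‖x‖ ^ 2 ≤ (inner ℂ x (a t x)).re) : IsUnit T := by
  have hre : ∀ {H : Type _} [NormedAddCommGroup H] [InnerProductSpace ℂ H] (S : H →L[ℂ] H) (x : H),
      (inner ℂ x ((S - (c : ℂ) • 1) x)).re = (inner ℂ x (S x)).re - c * ‖x‖ ^ 2 := fun S x => by
    rw [_root_.sub_apply, inner_sub_right, Complex.sub_re,
      _root_.smul_apply, inner_smul_right, one_apply_eq_self,
      Complex.re_ofReal_mul, inner_self_eq_norm_sq_to_K]
    norm_cast
  have hpos := (hT.sub_smul_one ha c).re_inner_nonneg (ha.sub continuous_const)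
    fun t x => by rw [hre]; exact sub_nonneg.2 (hcoer t x)
  refine ContinuousLinearMap.isUnit_of_forall_le_norm_inner_map T (c := ⟨c, hc.le⟩) hc fun x => ?_
  calc ‖x‖ ^ 2 * c ≤ (inner ℂ x (T x)).re := by
        rw [mul_comm, ← sub_nonneg, ← hre]; exact hpos x
    _ ≤ ‖inner ℂ x (T x)‖ := Complex.re_le_norm _
    _ = ‖inner ℂ (T x) x‖ := norm_inner_symm _ _

end Positivity

/-! ### Riemann–Hilbert factorization -/

section PowerSeries

variable {E : Type*} [NormedAddCommGroup E] [NormedSpace ℂ E]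

lemma diffContOnCl_tsum_pow_smul [CompleteSpace E] {c : ℕ → E} (hc : Summable fun n => ‖c n‖) :
    DiffContOnCl ℂ (fun z : ℂ => ∑' n, z ^ n • c n) (Metric.ball 0 1) := by
  have hbound : ∀ n, ∀ z ∈ Metric.closedBall (0 : ℂ) 1, ‖z ^ n • c n‖ ≤ ‖c n‖ := fun n z hz => by
    rw [norm_smul, norm_pow]
    exact mul_le_of_le_one_left (norm_nonneg _)
      (pow_le_one₀ (norm_nonneg z) (mem_closedBall_zero_iff.1 hz))
  refine .mk_ball ?_ ?_
  · exact Complex.differentiableOn_tsum_of_summable_norm hc (fun n => by fun_prop)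
      Metric.isOpen_ball fun n z hz => hbound n z (Metric.ball_subset_closedBall hz)
  · exact continuousOn_tsum (fun n => by fun_prop) hc hbound

lemma tsum_zero_pow_smul (c : ℕ → E) : ∑' n, (0 : ℂ) ^ n • c n = c 0 := by
  rw [tsum_eq_single 0 fun n hn => by rw [zero_pow hn, zero_smul], pow_zero, one_smul]

end PowerSeries

section Convolution

variable {R : Type*} [NormedRing R] {A : ℤ → R} {X : ℕ → R}

/-- The bijection `(k, n) ↦ (k + n, n)` that groups the terms of a product of a Laurent series and
a power series by total degree. -/
def totalDegreeEquiv : ℤ × ℕ ≃ ℤ × ℕ where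
  toFun x := (x.1 + x.2, x.2)
  invFun x := (x.1 - x.2, x.2)
  left_inv x := by simp
  right_inv x := by simp

lemma summable_norm_convolution (hA : Summable fun k => ‖A k‖) (hX : Summable fun n => ‖X n‖) :
    Summable fun x : ℤ × ℕ => ‖A (x.1 - x.2) * X x.2‖ := by
  have hcomp : (fun x : ℤ × ℕ => ‖A (x.1 - x.2) * X x.2‖)
      = (fun x => ‖A x.1 * X x.2‖) ∘ totalDegreeEquiv.symm := rfl
  rw [hcomp, Equiv.summable_iff]
  exact hA.mul_norm hX

lemma summable_norm_tsum_convolution (hA : Summable fun k => ‖A k‖)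
    (hX : Summable fun n => ‖X n‖) : Summable fun m : ℤ => ‖∑' n : ℕ, A (m - n) * X n‖ :=
  (summable_norm_convolution hA hX).prod.of_nonneg_of_le (fun _ => norm_nonneg _) fun m =>
    norm_tsum_le_tsum_norm ((summable_norm_convolution hA hX).prod_factor m)

lemma hasSum_convolution [CompleteSpace R] (hA : Summable fun k => ‖A k‖)
    (hX : Summable fun n => ‖X n‖) :
    HasSum (fun m : ℤ => ∑' n : ℕ, A (m - n) * X n) ((∑' k, A k) * ∑' n, X n) := by
  have hsum := (summable_norm_convolution hA hX).of_norm
  have htotal : ∑' x : ℤ × ℕ, A (x.1 - x.2) * X x.2 = (∑' k, A k) * ∑' n, X n := by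
    rw [tsum_mul_tsum_of_summable_norm hA hX]
    exact totalDegreeEquiv.symm.tsum_eq fun x : ℤ × ℕ => A x.1 * X x.2
  exact (htotal ▸ hsum.hasSum).prod_fiberwise fun m => (hsum.prod_factor m).hasSum

end Convolution

/-- Smoothness of a function along the unit circle, in the parameter `t` of `e^{it}`. -/
def SmoothOnCircle {E : Type*} [NormedAddCommGroup E] [NormedSpace ℝ E] (f : ℂ → E) : Prop :=
  ContDiff ℝ (⊤ : ℕ∞) fun t : ℝ => f (Complex.exp (Complex.I * t))

lemma star_tsum_pow_smul_star {R : Type*} [NormedAddCommGroup R] [NormedSpace ℂ R] [StarAddMonoid R]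
    [NormedStarGroup R] [StarModule ℂ R] {C : ℤ → R} (hC : ∀ m, 0 < m → C m = 0) (t : ℝ) :
    star (∑' n : ℕ, Complex.exp (Complex.I * t) ^ n • star (C (-n))) = ∑' m, expMode m t • C m := by
  have hinj : Function.Injective fun n : ℕ => -(n : ℤ) := neg_injective.comp Nat.cast_injective
  have hsupp : Function.support (fun m => expMode m t • C m) ⊆ Set.range fun n : ℕ => -(n : ℤ) := by
    intro m hm
    have hle : m ≤ 0 := not_lt.1 fun hpos => hm (by simp [hC m hpos])
    exact ⟨m.natAbs, by simp only; omega⟩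
  rw [tsum_star, ← hinj.tsum_eq hsupp]
  refine tsum_congr fun n => ?_
  rw [star_smul, star_star, ← expMode_natCast, star_expMode]

section RiemannHilbert

variable {E : Type*} [NormedAddCommGroup E] [InnerProductSpace ℂ E] [CompleteSpace E]

lemma IsToeplitz.tsum_periodicCoeff_mul_matrixCoeff {T S : HardySpace E →L[ℂ] HardySpace E}
    {a : ℝ → E →L[ℂ] E} (hT : IsToeplitz T a) (hTS : T * S = 1) (p : ℕ)
    (hsum : Summable fun q : ℕ => periodicCoeff a (p - q) * matrixCoeff q 0 S) :
    ∑' q : ℕ, periodicCoeff a (p - q) * matrixCoeff q 0 S = if p = 0 then 1 else 0 := by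
  rw [← matrixCoeff_one, ← hTS]
  ext v
  have happly := hsum.hasSum.mapL (ContinuousLinearMap.apply ℂ E v)
  have hcoeff := hasSum_matrixCoeff_apply T (S (lp.single 2 0 v)) p
  simp only [hT p] at hcoeff
  exact happly.unique hcoeff

/-- Let `S` invert the Toeplitz operator of `a`. The power series `X` whose coefficients form the
zeroth column of `S` is made so that `a X` has no Fourier modes of positive frequency and constant
term `1`. -/
theorem exists_mul_eq_star_of_coercive {a : ℝ → E →L[ℂ] E} (ha : ContDiff ℝ (⊤ : ℕ∞) a)
    (hper : Function.Periodic a (2 * Real.pi)) {c : ℝ} (hc : 0 < c)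
    (hcoer : ∀ t x, c * ‖x‖ ^ 2 ≤ (inner ℂ x (a t x)).re) :
    ∃ X Y : ℂ → E →L[ℂ] E, SmoothOnCircle X ∧ DiffContOnCl ℂ X (Metric.ball 0 1) ∧
      DiffContOnCl ℂ Y (Metric.ball 0 1) ∧ Y 0 = 1 ∧
      ∀ t : ℝ, a t * X (Complex.exp (Complex.I * t)) = star (Y (Complex.exp (Complex.I * t))) := by
  obtain ⟨T₀, hT, hTsmooth⟩ := exists_isToeplitz_isSmoothOperator ha hper
  obtain ⟨T, rfl⟩ := hT.isUnit ha.continuous hc hcoer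
  let A := periodicCoeff a
  let x : ℕ → E →L[ℂ] E := fun n => matrixCoeff n 0 ↑T⁻¹
  let C : ℤ → E →L[ℂ] E := fun m => ∑' n : ℕ, A (m - n) * x n
  have hx : RapidlyDecreasing (fun n : ℕ => (n : ℤ)) x := hTsmooth.inv.rapidlyDecreasing_matrixCoeff
  have hA : Summable fun k => ‖A k‖ := (rapidlyDecreasing_periodicCoeff ha hper).summable_norm
  have hCsum : Summable fun m => ‖C m‖ := summable_norm_tsum_convolution hA hx.summable_norm
  have hCnat : ∀ p : ℕ, C p = if p = 0 then 1 else 0 := fun p =>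
    hT.tsum_periodicCoeff_mul_matrixCoeff T.mul_inv p
      ((summable_norm_convolution hA hx.summable_norm).prod_factor (p : ℤ)).of_norm
  have hCpos : ∀ m, 0 < m → C m = 0 := fun m hm => by
    lift m to ℕ using hm.le
    rw [hCnat, if_neg (by omega)]
  refine ⟨fun z => ∑' n, z ^ n • x n, fun z => ∑' n : ℕ, z ^ n • star (C (-n)), ?_,
    diffContOnCl_tsum_pow_smul hx.summable_norm, diffContOnCl_tsum_pow_smul ?_, ?_, fun t => ?_⟩
  · simpa only [SmoothOnCircle, expMode_natCast] using contDiff_tsum_expMode_smul hx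
  · simp only [norm_star]
    exact hCsum.comp_injective (neg_injective.comp Nat.cast_injective)
  · have h0 := hCnat 0
    simp only [if_true, Nat.cast_zero] at h0
    refine (tsum_zero_pow_smul _).trans ?_
    rw [Nat.cast_zero, neg_zero, h0, star_one]
  · beta_reduce
    rw [star_tsum_pow_smul_star hCpos]
    have hprod := hasSum_convolution (A := fun k => expMode k t • A k)
      (X := fun n => expMode n t • x n) (by simpa only [norm_smul, norm_expMode, one_mul] using hA)
      (by simpa only [norm_smul, norm_expMode, one_mul] using hx.summable_norm)
    have hterm : ∀ m : ℤ, ∑' n : ℕ, (expMode (m - n) t • A (m - n)) * (expMode n t • x n)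
        = expMode m t • C m := fun m => by
      simp only [smul_mul_smul_comm, ← expMode_add, sub_add_cancel]
      exact tsum_const_smul'' _
    simp only [hterm] at hprod
    simp only [expMode_natCast] at hprod
    rw [hprod.tsum_eq, (hasSum_periodicCoeff ha.continuous hper hA t).tsum_eq]

end RiemannHilbert

/-! ### Reflection in the unit circle -/

section Reflection

lemma eq_on_closedBall_of_eq_on_circle {E : Type*} [NormedAddCommGroup E] [NormedSpace ℂ E]
    {f h : ℂ → E} (hf : DiffContOnCl ℂ f (Metric.ball 0 1))
    (hh : DiffContOnCl ℂ h (Metric.ball 0 1)) (heq : ∀ z, ‖z‖ = 1 → f z = h z) :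
    ∀ z ∈ Metric.closedBall 0 1, f z = h z := by
  rw [← closure_ball (0 : ℂ) one_ne_zero]
  refine Complex.eqOn_closure_of_eqOn_frontier Metric.isBounded_ball hf hh fun z hz => ?_
  rw [frontier_ball (0 : ℂ) one_ne_zero] at hz
  exact heq z (mem_sphere_zero_iff_norm.1 hz)

lemma eq_zero_on_circle_of_circleAverage_eq_zero {u : ℂ → ℝ}
    (hu : ContinuousOn u (Metric.sphere 0 1)) (hnonneg : ∀ z, ‖z‖ = 1 → 0 ≤ u z)
    (havg : Real.circleAverage u 0 1 = 0) (z : ℂ) (hz : ‖z‖ = 1) : u z = 0 := by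
  obtain ⟨θ, hθ, rfl⟩ : z ∈ circleMap 0 1 '' Set.Ioc 0 (2 * Real.pi) := by
    rw [image_circleMap_Ioc, abs_one]
    exact mem_sphere_zero_iff_norm.2 hz
  have hsphere : ∀ φ, circleMap 0 1 φ ∈ Metric.sphere (0 : ℂ) 1 :=
    circleMap_mem_sphere 0 zero_le_one
  by_contra hne
  have hpos := intervalIntegral.integral_pos Real.two_pi_pos
    (hu.comp (continuous_circleMap 0 1).continuousOn fun φ _ => hsphere φ)
    (fun φ _ => hnonneg _ (mem_sphere_zero_iff_norm.1 (hsphere φ)))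
    ⟨θ, Set.Ioc_subset_Icc_self hθ, (hnonneg _ hz).lt_of_ne' hne⟩
  exact (smul_pos (inv_pos.2 Real.two_pi_pos) hpos).ne' havg

/-- On the circle `(f - f 0) * (h - star (f 0)) = |f - f 0|²`, and the left-hand side has mean `0`,
its value at the centre. -/
lemma eq_apply_zero_of_eq_star {f h : ℂ → ℂ} (hf : DiffContOnCl ℂ f (Metric.ball 0 1))
    (hh : DiffContOnCl ℂ h (Metric.ball 0 1)) (heq : ∀ z, ‖z‖ = 1 → f z = star (h z)) :
    ∀ z ∈ Metric.closedBall 0 1, f z = f 0 := by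
  let F : ℂ → ℂ := fun z => (f z - f 0) * (h z - star (f 0))
  have hF : DiffContOnCl ℂ F (Metric.ball 0 |1|) := by
    rw [abs_one]
    exact (hf.sub diffContOnCl_const).smul (hh.sub diffContOnCl_const)
  have hnormSq : ∀ z, ‖z‖ = 1 → F z = ((‖f z - f 0‖ ^ 2 : ℝ) : ℂ) := fun z hz => by
    simp only [F]
    rw [← star_star (h z), ← heq z hz, ← star_sub, Complex.star_def, Complex.mul_conj']
    push_cast; rfl
  have hcont : ContinuousOn (fun z => ‖f z - f 0‖ ^ 2) (Metric.sphere 0 1) :=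
    (((hf.continuousOn_ball).mono Metric.sphere_subset_closedBall).sub
      continuousOn_const).norm.pow 2
  have havg : Real.circleAverage (fun z => ‖f z - f 0‖ ^ 2) 0 1 = 0 := by
    have hint : CircleIntegrable F 0 1 := ContinuousOn.circleIntegrable zero_le_one <| by
      rw [abs_one] at hF
      exact hF.continuousOn_ball.mono Metric.sphere_subset_closedBall
    calc Real.circleAverage (fun z => ‖f z - f 0‖ ^ 2) 0 1
      _ = Real.circleAverage (Complex.reCLM ∘ F) 0 1 :=
        Real.circleAverage_congr_sphere fun z hz => by
          rw [abs_one] at hz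
          simp only [Function.comp_apply, hnormSq z (mem_sphere_zero_iff_norm.1 hz),
            Complex.reCLM_apply, Complex.ofReal_re]
      _ = (F 0).re := by
        rw [Complex.reCLM.circleAverage_comp_comm hint, hF.circleAverage, Complex.reCLM_apply]
      _ = 0 := by simp only [F, sub_self, zero_mul, Complex.zero_re]
  refine eq_on_closedBall_of_eq_on_circle hf diffContOnCl_const fun z hz => ?_
  have := eq_zero_on_circle_of_circleAverage_eq_zero hcont (fun _ _ => sq_nonneg _) havg z hz
  exact sub_eq_zero.1 (norm_eq_zero.1 (pow_eq_zero_iff two_ne_zero |>.1 this))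

end Reflection

/-! ### Iwasawa factorization of matrix loops -/

section MatrixLoops

open scoped ComplexOrder MatrixOrder

lemma SmoothOnCircle.mul {R : Type*} [NormedRing R] [NormedAlgebra ℝ R] {f h : ℂ → R}
    (hf : SmoothOnCircle f) (hh : SmoothOnCircle h) : SmoothOnCircle fun z => f z * h z :=
  ContDiff.mul hf hh

lemma SmoothOnCircle.comp_neg {E : Type*} [NormedAddCommGroup E] [NormedSpace ℝ E] {f : ℂ → E}
    (hf : SmoothOnCircle f) : SmoothOnCircle fun z => f (-z) := by
  have hshift : ∀ t : ℝ, Complex.exp (Complex.I * ((t + Real.pi : ℝ) : ℂ))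
      = -Complex.exp (Complex.I * t) := fun t => by
    rw [Complex.ofReal_add, mul_add, mul_comm Complex.I (Real.pi : ℂ), Complex.exp_add_pi_mul_I]
  simpa only [SmoothOnCircle, Function.comp_def, id_eq, hshift] using
    ContDiff.comp hf (contDiff_id.add contDiff_const : ContDiff ℝ _ fun t : ℝ => t + Real.pi)

lemma diffContOnCl_mul {R : Type*} [NormedRing R] [NormedAlgebra ℂ R] {f h : ℂ → R} {s : Set ℂ}
    (hf : DiffContOnCl ℂ f s) (hh : DiffContOnCl ℂ h s) : DiffContOnCl ℂ (fun z => f z * h z) s :=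
  ⟨hf.1.mul hh.1, hf.2.mul hh.2⟩

lemma diffContOnCl_comp_neg {E : Type*} [NormedAddCommGroup E] [NormedSpace ℂ E] {f : ℂ → E}
    (hf : DiffContOnCl ℂ f (Metric.ball 0 1)) :
    DiffContOnCl ℂ (fun z => f (-z)) (Metric.ball 0 1) :=
  hf.comp differentiable_neg.diffContOnCl fun z hz => by
    simpa only [mem_ball_zero_iff, norm_neg] using hz

variable {n : Type*} [Fintype n]

lemma SmoothOnCircle.conjTranspose {f : ℂ → Matrix n n ℂ} (hf : SmoothOnCircle f) :
    SmoothOnCircle fun z => (f z)ᴴ :=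
  ((Matrix.conjTransposeLinearEquiv n n ℝ ℂ).toLinearMap.toContinuousLinearMap).contDiff.comp hf

lemma diffContOnCl_matrix_apply {f : ℂ → Matrix n n ℂ} {s : Set ℂ} (hf : DiffContOnCl ℂ f s)
    (i j : n) : DiffContOnCl ℂ (fun z => f z i j) s :=
  (Matrix.entryLinearMap ℂ ℂ i j).toContinuousLinearMap.differentiable.comp_diffContOnCl hf

lemma eq_apply_zero_of_eq_conjTranspose {A K : ℂ → Matrix n n ℂ}
    (hA : DiffContOnCl ℂ A (Metric.ball 0 1)) (hK : DiffContOnCl ℂ K (Metric.ball 0 1))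
    (heq : ∀ z, ‖z‖ = 1 → A z = (K z)ᴴ) :
    ∀ z ∈ Metric.closedBall 0 1, A z = A 0 := fun z hz => by
  ext i j
  refine eq_apply_zero_of_eq_star (diffContOnCl_matrix_apply hA i j)
    (diffContOnCl_matrix_apply hK j i) (fun w hw => ?_) z hz
  rw [heq w hw, Matrix.conjTranspose_apply]

variable [DecidableEq n]

lemma diffContOnCl_matrix_inv {f : ℂ → Matrix n n ℂ} {s : Set ℂ} (hf : DiffContOnCl ℂ f s)
    (hunit : ∀ z ∈ closure s, IsUnit (f z)) : DiffContOnCl ℂ (fun z => (f z)⁻¹) s := by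
  have hinv : ∀ z ∈ closure s, DifferentiableAt ℂ (Ring.inverse : Matrix n n ℂ → _) (f z) :=
    fun z hz => differentiableAt_inverse (hunit z hz)
  simp only [Matrix.nonsing_inv_eq_ringInverse]
  exact ⟨fun z hz => (hinv z (subset_closure hz)).comp_differentiableWithinAt z (hf.1 z hz),
    fun z hz => (hinv z hz).continuousAt.comp_continuousWithinAt (hf.2 z hz)⟩

lemma differentiable_matrix_det : Differentiable ℂ (Matrix.det : Matrix n n ℂ → ℂ) := by
  have : ∀ i j, Differentiable ℂ fun A : Matrix n n ℂ => A i j := fun i j =>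
    (Matrix.entryLinearMap ℂ ℂ i j).toContinuousLinearMap.differentiable
  have hdet : (Matrix.det : Matrix n n ℂ → ℂ)
      = fun A => ∑ σ : Equiv.Perm n, (Equiv.Perm.sign σ : ℂ) * ∏ i, A (σ i) i :=
    funext Matrix.det_apply'
  rw [hdet]
  fun_prop

lemma exists_coercive_bound {E : Type*} [NormedAddCommGroup E] [InnerProductSpace ℂ E]
    [FiniteDimensional ℂ E] {a : ℝ → E →L[ℂ] E} (ha : Continuous a)
    (hper : Function.Periodic a (2 * Real.pi))
    (hpos : ∀ t, ∀ x ≠ 0, 0 < (inner ℂ x (a t x)).re) :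
    ∃ c > 0, ∀ t x, c * ‖x‖ ^ 2 ≤ (inner ℂ x (a t x)).re := by
  have : ProperSpace E := FiniteDimensional.proper ℂ E
  have hcompact : IsCompact (Set.Icc 0 (2 * Real.pi) ×ˢ Metric.sphere (0 : E) 1) :=
    isCompact_Icc.prod (isCompact_sphere 0 1)
  have hcont : Continuous fun p : ℝ × E => (inner ℂ p.2 (a p.1 p.2)).re :=
    Complex.continuous_re.comp
      (continuous_snd.inner ((ha.comp continuous_fst).clm_apply continuous_snd))
  obtain ⟨c, hc, hle⟩ := hcompact.exists_forall_le' hcont.continuousOn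
    fun p hp => hpos p.1 p.2 (ne_zero_of_mem_unit_sphere ⟨p.2, hp.2⟩)
  refine ⟨c, hc, fun t x => ?_⟩
  rcases eq_or_ne x 0 with rfl | hx
  · simp
  obtain ⟨s, hs, hts⟩ := hper.exists_mem_Ico₀ Real.two_pi_pos t
  have hunit := hle (s, (‖x‖⁻¹ : ℂ) • x) ⟨Set.Ico_subset_Icc_self hs,
    mem_sphere_zero_iff_norm.2 (norm_smul_inv_norm hx)⟩
  have hscale : (inner ℂ ((‖x‖⁻¹ : ℂ) • x) (a s ((‖x‖⁻¹ : ℂ) • x))).re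
      = (inner ℂ x (a t x)).re / ‖x‖ ^ 2 := by
    rw [map_smul, inner_smul_left, inner_smul_right, ← mul_assoc, hts, map_inv₀,
      Complex.conj_ofReal, ← mul_inv, ← Complex.ofReal_mul, ← Complex.ofReal_inv,
      Complex.re_ofReal_mul, ← sq, inv_mul_eq_div]
  exact (le_div_iff₀ (by positivity)).1 (hunit.trans_eq hscale)

theorem exists_mul_eq_conjTranspose_of_posDef {a : ℝ → Matrix n n ℂ} (ha : ContDiff ℝ (⊤ : ℕ∞) a)
    (hper : Function.Periodic a (2 * Real.pi)) (hpos : ∀ t, (a t).PosDef) :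
    ∃ X Y : ℂ → Matrix n n ℂ, SmoothOnCircle X ∧ DiffContOnCl ℂ X (Metric.ball 0 1) ∧
      DiffContOnCl ℂ Y (Metric.ball 0 1) ∧ Y 0 = 1 ∧
      ∀ t : ℝ, a t * X (Complex.exp (Complex.I * t)) = (Y (Complex.exp (Complex.I * t)))ᴴ := by
  let Φ := Matrix.toEuclideanCLM (n := n) (𝕜 := ℂ)
  let L := Φ.toAlgEquiv.toLinearMap.toContinuousLinearMap
  let M := Φ.symm.toAlgEquiv.toLinearMap.toContinuousLinearMap
  have hsmooth : ContDiff ℝ (⊤ : ℕ∞) fun t => Φ (a t) := (L.restrictScalars ℝ).contDiff.comp ha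
  obtain ⟨c, hc, hcoer⟩ := exists_coercive_bound hsmooth.continuous (hper.comp Φ) fun t x hx => by
    rw [EuclideanSpace.inner_eq_star_dotProduct, dotProduct_comm]
    exact (hpos t).re_dotProduct_pos fun h => hx (WithLp.ofLp_injective _ h)
  obtain ⟨X, Y, hXsm, hX, hY, hY0, heq⟩ :=
    exists_mul_eq_star_of_coercive hsmooth (hper.comp Φ) hc hcoer
  refine ⟨fun z => Φ.symm (X z), fun z => Φ.symm (Y z),
    (M.restrictScalars ℝ).contDiff.comp hXsm, M.differentiable.comp_diffContOnCl hX,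
    M.differentiable.comp_diffContOnCl hY, ?_, fun t => ?_⟩
  · simp only [hY0, map_one]
  · have hstar := congrArg Φ.symm (heq t)
    rw [map_mul, Φ.symm_apply_apply] at hstar
    exact hstar.trans (Φ.symm.map_star' _)

end MatrixLoops

section Iwasawa

open scoped ComplexOrder MatrixOrder

lemma exists_posDef_mul_self_eq {n : Type*} [Fintype n] {C : Matrix n n ℂ} (hC : C.PosDef) :
    ∃ P : Matrix n n ℂ, P.PosDef ∧ P * P = C := by
  classical
  exact ⟨CFC.sqrt C, Matrix.isStrictlyPositive_iff_posDef.1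
    (IsStrictlyPositive.sqrt C (Matrix.isStrictlyPositive_iff_posDef.2 hC)),
    CFC.sqrt_mul_sqrt_self C hC.posSemidef.nonneg⟩

variable {n : Type*} [Fintype n] [DecidableEq n] {g F B F' B' : ℂ → Matrix n n ℂ}

lemma eq_of_posDef_of_eq_unitary_mul {P Q U : Matrix n n ℂ} (hP : P.PosDef) (hQ : Q.PosDef)
    (hU : Uᴴ * U = 1) (heq : Q = U * P) : Q = P := by
  refine (CFC.sq_eq_sq_iff Q P hQ.posSemidef.nonneg hP.posSemidef.nonneg).1 ?_
  calc Q ^ 2 = Qᴴ * Q := by rw [sq, hQ.isHermitian.eq]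
    _ = Pᴴ * (Uᴴ * U) * P := by
        rw [heq, Matrix.conjTranspose_mul]; simp only [Matrix.mul_assoc]
    _ = P ^ 2 := by rw [hU, Matrix.mul_one, hP.isHermitian.eq, sq]

/-- A singular `C` would force `det (g X)`, and hence `det Y`, to vanish on the circle. -/
lemma posDef_of_conjTranspose_mul_self_eq {X Y : ℂ → Matrix n n ℂ} {C : Matrix n n ℂ}
    (hY : DiffContOnCl ℂ Y (Metric.ball 0 1)) (hY0 : Y 0 = 1)
    (hC : ∀ z, ‖z‖ = 1 → (g z * X z)ᴴ * (g z * X z) = C)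
    (hXY : ∀ z, ‖z‖ = 1 → (g z)ᴴ * g z * X z = (Y z)ᴴ) : C.PosDef := by
  have hpsd : C.PosSemidef := hC 1 norm_one ▸ Matrix.posSemidef_conjTranspose_mul_self _
  rw [hpsd.posDef_iff_isUnit, Matrix.isUnit_iff_isUnit_det, isUnit_iff_ne_zero]
  intro hdet
  have hdetY : ∀ z, ‖z‖ = 1 → (Y z).det = 0 := fun z hz => by
    have hgX : (g z * X z).det = 0 := by
      rw [← hC z hz, Matrix.det_mul, Matrix.det_conjTranspose] at hdet
      simpa only [mul_eq_zero, star_eq_zero, or_self] using hdet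
    rw [← star_eq_zero, ← Matrix.det_conjTranspose, ← hXY z hz, Matrix.mul_assoc, Matrix.det_mul,
      hgX, mul_zero]
  have hzero := eq_on_closedBall_of_eq_on_circle (differentiable_matrix_det.comp_diffContOnCl hY)
    (diffContOnCl_const (c := 0)) hdetY 0 (Metric.mem_closedBall_self zero_le_one)
  exact one_ne_zero ((Matrix.det_one (n := n)).symm.trans (by rwa [← hY0]))

lemma exists_mul_eq_posDef (hg : SmoothOnCircle g) (hunit : ∀ z, ‖z‖ = 1 → IsUnit (g z)) :
    ∃ (X Y : ℂ → Matrix n n ℂ) (C : Matrix n n ℂ), SmoothOnCircle X ∧ SmoothOnCircle Y ∧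
      DiffContOnCl ℂ Y (Metric.ball 0 1) ∧ Y 0 = 1 ∧ C.PosDef ∧
      (∀ z ∈ Metric.closedBall 0 1, Y z * X z = C) ∧
      ∀ z, ‖z‖ = 1 → (g z * X z)ᴴ * (g z * X z) = C := by
  have hsymbol : SmoothOnCircle fun z => (g z)ᴴ * g z := hg.conjTranspose.mul hg
  obtain ⟨X, Y, hXsm, hX, hY, hY0, heq⟩ := exists_mul_eq_conjTranspose_of_posDef hsymbol
    (periodic_comp_exp_I_mul fun z => (g z)ᴴ * g z) fun t =>
      .conjTranspose_mul_self _ (Matrix.mulVec_injective_of_isUnit (hunit _ (norm_exp_I_mul t)))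
  have hXY : ∀ z, ‖z‖ = 1 → (g z)ᴴ * g z * X z = (Y z)ᴴ := fun z hz => by
    obtain ⟨t, rfl⟩ := exists_exp_I_mul_eq hz
    exact heq t
  have hYX : ∀ z, ‖z‖ = 1 → Y z * X z = (g z * X z)ᴴ * (g z * X z) := fun z hz => by
    rw [← Matrix.conjTranspose_conjTranspose (Y z), ← hXY z hz]
    simp only [Matrix.conjTranspose_mul, Matrix.conjTranspose_conjTranspose, Matrix.mul_assoc]
  have hconst := eq_apply_zero_of_eq_conjTranspose (diffContOnCl_mul hY hX) (diffContOnCl_mul hY hX)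
    fun z hz => by
      rw [hYX z hz, (Matrix.isHermitian_conjTranspose_mul_self (g z * X z)).eq]
  have hC : ∀ z, ‖z‖ = 1 → (g z * X z)ᴴ * (g z * X z) = Y 0 * X 0 := fun z hz =>
    (hYX z hz).symm.trans (hconst z (mem_closedBall_zero_iff.2 hz.le))
  have hYsm : SmoothOnCircle Y := by
    have hstar := (hsymbol.mul hXsm).conjTranspose
    simpa only [SmoothOnCircle, hXY _ (norm_exp_I_mul _), Matrix.conjTranspose_conjTranspose]
      using hstar
  exact ⟨X, Y, _, hXsm, hYsm, hY, hY0, posDef_of_conjTranspose_mul_self_eq hY hY0 hC hXY,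
    hconst, hC⟩

/-- An Iwasawa factorization `g = F B` of a loop of invertible matrices: `F` is a smooth loop of
unitary matrices, and `B` is a smooth loop that extends to a holomorphic family of invertible
matrices on the unit disc. The factors are normalized by requiring `B 0` to be positive definite. -/
structure IsIwasawaFactorization (g F B : ℂ → Matrix n n ℂ) : Prop where
  smooth_left : SmoothOnCircle F
  unitary : ∀ z, ‖z‖ = 1 → (F z)ᴴ * F z = 1
  smooth_right : SmoothOnCircle B
  diffContOnCl : DiffContOnCl ℂ B (Metric.ball 0 1)
  isUnit_right : ∀ z ∈ Metric.closedBall 0 1, IsUnit (B z)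
  posDef_right_zero : (B 0).PosDef
  eq_mul : ∀ z, ‖z‖ = 1 → g z = F z * B z

namespace IsIwasawaFactorization

lemma diffContOnCl_inv (h : IsIwasawaFactorization g F B) :
    DiffContOnCl ℂ (fun z => (B z)⁻¹) (Metric.ball 0 1) :=
  diffContOnCl_matrix_inv h.diffContOnCl <| by
    rw [closure_ball (0 : ℂ) one_ne_zero]
    exact h.isUnit_right

lemma mul_inv_eq_of_norm_eq_one (h : IsIwasawaFactorization g F B)
    (h' : IsIwasawaFactorization g F' B') {z : ℂ} (hz : ‖z‖ = 1) :
    B' z * (B z)⁻¹ = (F' z)ᴴ * F z := by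
  have hunit := (Matrix.isUnit_iff_isUnit_det _).1
    (h.isUnit_right z (mem_closedBall_zero_iff.2 hz.le))
  calc B' z * (B z)⁻¹ = (F' z)ᴴ * (F' z * B' z) * (B z)⁻¹ := by
        rw [← Matrix.mul_assoc, h'.unitary z hz, Matrix.one_mul]
    _ = (F' z)ᴴ * F z := by
        rw [← h'.eq_mul z hz, h.eq_mul z hz, ← Matrix.mul_assoc,
          Matrix.mul_nonsing_inv_cancel_right _ _ hunit]

/-- The quotient `B' B⁻¹` is unitary on the circle, so it reflects to `B B'⁻¹` and is constant. -/
lemma exists_unitary_mul (h : IsIwasawaFactorization g F B)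
    (h' : IsIwasawaFactorization g F' B') :
    ∃ U : Matrix n n ℂ, Uᴴ * U = 1 ∧ ∀ z ∈ Metric.closedBall 0 1, B' z = U * B z := by
  have hconst := eq_apply_zero_of_eq_conjTranspose
    (diffContOnCl_mul h'.diffContOnCl h.diffContOnCl_inv)
    (diffContOnCl_mul h.diffContOnCl h'.diffContOnCl_inv) fun z hz => by
      rw [h.mul_inv_eq_of_norm_eq_one h' hz, h'.mul_inv_eq_of_norm_eq_one h hz,
        Matrix.conjTranspose_mul, Matrix.conjTranspose_conjTranspose]
  refine ⟨B' 0 * (B 0)⁻¹, ?_, fun z hz => ?_⟩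
  · rw [← hconst 1 (mem_closedBall_zero_iff.2 norm_one.le),
      h.mul_inv_eq_of_norm_eq_one h' norm_one, Matrix.conjTranspose_mul,
      Matrix.conjTranspose_conjTranspose, Matrix.mul_assoc, ← Matrix.mul_assoc (F' 1),
      mul_eq_one_comm.1 (h'.unitary 1 norm_one), Matrix.one_mul, h.unitary 1 norm_one]
  · have hunit := (Matrix.isUnit_iff_isUnit_det _).1 (h.isUnit_right z hz)
    rw [← hconst z hz, Matrix.nonsing_inv_mul_cancel_right _ _ hunit]

theorem unique (h : IsIwasawaFactorization g F B) (h' : IsIwasawaFactorization g F' B') :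
    (∀ z, ‖z‖ = 1 → F' z = F z) ∧ ∀ z ∈ Metric.closedBall 0 1, B' z = B z := by
  obtain ⟨U, hU, hUB⟩ := h.exists_unitary_mul h'
  have hzero := hUB 0 (Metric.mem_closedBall_self zero_le_one)
  have hone : U = 1 := by
    rw [eq_of_posDef_of_eq_unitary_mul h.posDef_right_zero h'.posDef_right_zero hU hzero] at hzero
    exact (h.posDef_right_zero.isUnit.mul_eq_right).1 hzero.symm
  have hB : ∀ z ∈ Metric.closedBall 0 1, B' z = B z := fun z hz => by
    rw [hUB z hz, hone, Matrix.one_mul]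
  refine ⟨fun z hz => ?_, hB⟩
  have hz' := mem_closedBall_zero_iff.2 hz.le
  refine (h.isUnit_right z hz').mul_right_cancel ?_
  rw [← h.eq_mul z hz, h'.eq_mul z hz, hB z hz']

theorem exists_of_smoothOnCircle (hg : SmoothOnCircle g) (hunit : ∀ z, ‖z‖ = 1 → IsUnit (g z)) :
    ∃ F B, IsIwasawaFactorization g F B := by
  obtain ⟨X, Y, C, hX, hYsm, hY, hY0, hC, hYX, hgX⟩ := exists_mul_eq_posDef hg hunit
  obtain ⟨P, hP, rfl⟩ := exists_posDef_mul_self_eq hC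
  have hPdet := (Matrix.isUnit_iff_isUnit_det P).1 hP.isUnit
  have hPinv : P⁻¹ * (P * P) * P⁻¹ = 1 := by
    rw [Matrix.nonsing_inv_mul_cancel_left _ _ hPdet, Matrix.mul_nonsing_inv _ hPdet]
  refine ⟨fun z => g z * X z * P⁻¹, fun z => P⁻¹ * Y z, ?_⟩
  have hBX : ∀ z ∈ Metric.closedBall 0 1, P⁻¹ * Y z * (X z * P⁻¹) = 1 := fun z hz => by
    rw [← hPinv, ← hYX z hz]; simp only [Matrix.mul_assoc]
  exact {
    smooth_left := (hg.mul hX).mul contDiff_const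
    unitary := fun z hz => by
      rw [← hPinv, ← hgX z hz, Matrix.conjTranspose_mul, hP.inv.isHermitian.eq]
      simp only [Matrix.mul_assoc]
    smooth_right := ContDiff.mul contDiff_const hYsm
    diffContOnCl := diffContOnCl_mul diffContOnCl_const hY
    isUnit_right := fun z hz => .of_mul_eq_one _ (hBX z hz)
    posDef_right_zero := by rw [hY0, Matrix.mul_one]; exact hP.inv
    eq_mul := fun z hz => by
      rw [Matrix.mul_assoc (g z), Matrix.mul_assoc (g z),
        mul_eq_one_comm.1 (hBX z (mem_closedBall_zero_iff.2 hz.le)), Matrix.mul_one] }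

lemma norm_det_left (h : IsIwasawaFactorization g F B) {z : ℂ} (hz : ‖z‖ = 1) :
    ‖(F z).det‖ = 1 := by
  have hdet := congrArg (fun A => ‖Matrix.det A‖) (h.unitary z hz)
  simp only [Matrix.det_mul, Matrix.det_conjTranspose, norm_mul, norm_star, Matrix.det_one,
    norm_one] at hdet
  exact (mul_self_eq_one_iff.1 hdet).resolve_right (by linarith [norm_nonneg (F z).det])

theorem det_right_eq_one (h : IsIwasawaFactorization g F B) (hdet : ∀ z, ‖z‖ = 1 → (g z).det = 1) :
    ∀ z ∈ Metric.closedBall 0 1, (B z).det = 1 := by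
  have hne : ∀ z ∈ Metric.closedBall 0 1, (B z).det ≠ 0 := fun z hz =>
    ((Matrix.isUnit_iff_isUnit_det _).1 (h.isUnit_right z hz)).ne_zero
  have hnorm : ∀ z, ‖z‖ = 1 → ‖(B z).det‖ = 1 := fun z hz => by
    have hmul := congrArg norm (hdet z hz)
    rwa [h.eq_mul z hz, Matrix.det_mul, norm_mul, h.norm_det_left hz, one_mul, norm_one] at hmul
  have hdiff : DiffContOnCl ℂ (fun z => (B z).det) (Metric.ball 0 1) :=
    differentiable_matrix_det.comp_diffContOnCl h.diffContOnCl
  have hconst := eq_apply_zero_of_eq_star hdiff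
    (hdiff.inv (by rwa [closure_ball (0 : ℂ) one_ne_zero])) fun z hz => by
      rw [Pi.inv_apply, Complex.inv_eq_conj (hnorm z hz), Complex.star_def, Complex.conj_conj]
  have hzero : (B 0).det = 1 := by
    have hnorm0 := hnorm 1 norm_one
    rw [hconst 1 (mem_closedBall_zero_iff.2 norm_one.le)] at hnorm0
    rw [Complex.eq_coe_norm_of_nonneg h.posDef_right_zero.det_pos.le, hnorm0, Complex.ofReal_one]
  exact fun z hz => (hconst z hz).trans hzero

lemma comp_neg (h : IsIwasawaFactorization g F B) :
    IsIwasawaFactorization (fun z => g (-z)) (fun z => F (-z)) fun z => B (-z) where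
  smooth_left := h.smooth_left.comp_neg
  unitary z hz := h.unitary (-z) (by rwa [norm_neg])
  smooth_right := h.smooth_right.comp_neg
  diffContOnCl := diffContOnCl_comp_neg h.diffContOnCl
  isUnit_right z hz :=
    h.isUnit_right (-z) (by simpa only [mem_closedBall_zero_iff, norm_neg] using hz)
  posDef_right_zero := by simpa only [neg_zero] using h.posDef_right_zero
  eq_mul z hz := h.eq_mul (-z) (by rwa [norm_neg])

lemma conj (h : IsIwasawaFactorization g F B) {U : Matrix n n ℂ} (hU : Uᴴ * U = 1) :
    IsIwasawaFactorization (fun z => Uᴴ * g z * U) (fun z => Uᴴ * F z * U)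
      fun z => Uᴴ * B z * U where
  smooth_left := (contDiff_const.mul h.smooth_left).mul contDiff_const
  unitary z hz := by
    have hU' := mul_eq_one_comm.1 hU
    calc (Uᴴ * F z * U)ᴴ * (Uᴴ * F z * U) = Uᴴ * ((F z)ᴴ * (U * Uᴴ) * F z) * U := by
          simp only [Matrix.conjTranspose_mul, Matrix.conjTranspose_conjTranspose, Matrix.mul_assoc]
      _ = 1 := by rw [hU', Matrix.mul_one, h.unitary z hz, Matrix.mul_one, hU]
  smooth_right := (contDiff_const.mul h.smooth_right).mul contDiff_const
  diffContOnCl := diffContOnCl_mul (diffContOnCl_mul diffContOnCl_const h.diffContOnCl)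
    diffContOnCl_const
  isUnit_right z hz :=
    ((IsUnit.of_mul_eq_one _ hU).mul (h.isUnit_right z hz)).mul
      (.of_mul_eq_one_right _ hU)
  posDef_right_zero :=
    h.posDef_right_zero.conjTranspose_mul_mul_same
      (Matrix.mulVec_injective_of_isUnit (.of_mul_eq_one_right _ hU))
  eq_mul z hz := by
    calc Uᴴ * g z * U = Uᴴ * (F z * (U * Uᴴ) * B z) * U := by
          rw [mul_eq_one_comm.1 hU, Matrix.mul_one, h.eq_mul z hz]
      _ = Uᴴ * F z * U * (Uᴴ * B z * U) := by simp only [Matrix.mul_assoc]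

theorem twisted (h : IsIwasawaFactorization g F B) {U : Matrix n n ℂ} (hU : Uᴴ * U = 1)
    (hg : ∀ z, ‖z‖ = 1 → g (-z) = Uᴴ * g z * U) :
    (∀ z, ‖z‖ = 1 → F (-z) = Uᴴ * F z * U) ∧
      ∀ z ∈ Metric.closedBall 0 1, B (-z) = Uᴴ * B z * U := by
  refine (h.conj hU).unique ?_
  exact { h.comp_neg with eq_mul := fun z hz => by rw [← hg z hz, h.comp_neg.eq_mul z hz] }

end IsIwasawaFactorization

end Iwasawa

/-! ### Twisted loops in `SL(2, ℂ)` -/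

section Twisted

open scoped ComplexOrder

variable {g F B : ℂ → M2} {ρ : ℝ}

lemma conjTranspose_sigma3 : sigma3ᴴ = sigma3 := by
  ext i j
  fin_cases i <;> fin_cases j <;> simp [sigma3]

lemma sigma3_mul_self : sigma3 * sigma3 = 1 := by
  simp [sigma3, Matrix.one_fin_two]

lemma IwasawaPair.isIwasawaFactorization (h : IwasawaPair g F B ρ) :
    IsIwasawaFactorization g F B := by
  obtain ⟨hFsm, hF, hBcont, hBdiff, hBsm, hB, hρ, hB0, hgFB⟩ := h
  refine ⟨hFsm, fun z hz => (hF z hz).1, hBsm, .mk_ball hBdiff hBcont, fun z hz => ?_, ?_, hgFB⟩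
  · rw [Matrix.isUnit_iff_isUnit_det, (hB z hz).1]
    exact isUnit_one
  · have hdiag : !![(ρ : ℂ), 0; 0, ((ρ⁻¹ : ℝ) : ℂ)]
        = Matrix.diagonal fun i => ((![ρ, ρ⁻¹] i : ℝ) : ℂ) := by
      ext i j
      fin_cases i <;> fin_cases j <;> rfl
    rw [hB0, hdiag, Matrix.posDef_diagonal_iff, Fin.forall_fin_two]
    exact ⟨Complex.zero_lt_real.2 hρ, Complex.zero_lt_real.2 (inv_pos.2 hρ)⟩

lemma exists_eq_diagonal_of_commute_sigma3 {P : M2} (hP : P.PosDef) (hdet : P.det = 1)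
    (htw : P = sigma3 * P * sigma3) : ∃ ρ : ℝ, 0 < ρ ∧ P = !![(ρ : ℂ), 0; 0, ((ρ⁻¹ : ℝ) : ℂ)] := by
  have h01 : P 0 1 = 0 := by
    simpa [sigma3, Matrix.vecMul_eq_sum, CharZero.eq_neg_self_iff] using congrFun₂ htw 0 1
  have h10 : P 1 0 = 0 := by
    simpa [sigma3, Matrix.vecMul_eq_sum, CharZero.eq_neg_self_iff] using congrFun₂ htw 1 0
  obtain ⟨ρ, hρ⟩ : ∃ ρ : ℝ, (ρ : ℂ) = P 0 0 := ⟨(P 0 0).re, hP.isHermitian.coe_re_apply_self 0⟩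
  have hpos : 0 < ρ := Complex.zero_lt_real.1 (hρ ▸ hP.diag_pos)
  have hinv : P 1 1 = ((ρ⁻¹ : ℝ) : ℂ) := by
    rw [Matrix.det_fin_two, h01, zero_mul, sub_zero, ← hρ] at hdet
    rw [Complex.ofReal_inv]
    exact eq_inv_of_mul_eq_one_right hdet
  refine ⟨ρ, hpos, ?_⟩
  rw [Matrix.eta_fin_two P, h01, h10, hρ, hinv]

lemma IsIwasawaFactorization.exists_iwasawaPair (h : IsIwasawaFactorization g F B)
    (hgdet : ∀ l : ℂ, ‖l‖ = 1 → (g l).det = 1)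
    (hgtw : ∀ l : ℂ, ‖l‖ = 1 → g (-l) = sigma3 * g l * sigma3) : ∃ ρ, IwasawaPair g F B ρ := by
  have hdetB := h.det_right_eq_one hgdet
  obtain ⟨hFtw, hBtw⟩ := h.twisted (U := sigma3) (by rw [conjTranspose_sigma3, sigma3_mul_self])
    (by rwa [conjTranspose_sigma3])
  rw [conjTranspose_sigma3] at hFtw hBtw
  have hdetF : ∀ l, ‖l‖ = 1 → (F l).det = 1 := fun l hl => by
    rw [← hgdet l hl, h.eq_mul l hl, Matrix.det_mul, hdetB l (mem_closedBall_zero_iff.2 hl.le),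
      mul_one]
  have hzero := Metric.mem_closedBall_self (x := (0 : ℂ)) zero_le_one
  obtain ⟨ρ, hρ, hB0⟩ := exists_eq_diagonal_of_commute_sigma3 h.posDef_right_zero (hdetB 0 hzero)
    (by simpa only [neg_zero] using hBtw 0 hzero)
  exact ⟨ρ, h.smooth_left, fun l hl => ⟨h.unitary l hl, hdetF l hl, hFtw l hl⟩,
    h.diffContOnCl.continuousOn_ball, h.diffContOnCl.differentiableOn, h.smooth_right,
    fun l hl => ⟨hdetB l hl, hBtw l hl⟩, hρ, hB0, h.eq_mul⟩

end Twisted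

/-- Iwasawa decomposition of the twisted loop group of `SL(2,ℂ)` for
smooth loops: existence and uniqueness of the factorization `g = F B`. -/
theorem iwasawa_decomposition
    (g : ℂ → M2)
    (hgsm : ContDiff ℝ (⊤ : ℕ∞) (fun t : ℝ => g (Complex.exp (Complex.I * t))))
    (hgdet : ∀ l : ℂ, ‖l‖ = 1 → (g l).det = 1)
    (hgtw : ∀ l : ℂ, ‖l‖ = 1 → g (-l) = sigma3 * g l * sigma3) :
    ∃ F B : ℂ → M2, ∃ ρ : ℝ, IwasawaPair g F B ρ ∧
      ∀ F' B' : ℂ → M2, ∀ ρ' : ℝ, IwasawaPair g F' B' ρ' →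
        (∀ l : ℂ, ‖l‖ = 1 → F' l = F l) ∧
        (∀ l ∈ Metric.closedBall (0:ℂ) 1, B' l = B l) := by
  have hgunit : ∀ l, ‖l‖ = 1 → IsUnit (g l) := fun l hl => by
    rw [Matrix.isUnit_iff_isUnit_det, hgdet l hl]
    exact isUnit_one
  obtain ⟨F, B, hFB⟩ := IsIwasawaFactorization.exists_of_smoothOnCircle hgsm hgunit
  obtain ⟨ρ, hpair⟩ := hFB.exists_iwasawaPair hgdet hgtw
  exact ⟨F, B, ρ, hpair, fun F' B' ρ' hpair' => hFB.unique hpair'.isIwasawaFactorization⟩
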